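/- Let Γ be a subgroup of SL(2,ℝ) commensurable with SL(2,ℤ) whose cusp ∞ has width N, let χ be a finite-order character of Γ, and let φ: ℍ → ℂ be holomorphic, N-periodic and holomorphic at ∞, with (cz+d)^{-2} φ((az+b)/(cz+d)) = φ(z) + α c/(cz+d) for all (a b; c d) ∈ Γ, α ≠ 0. Let f = f₀ + φ f₁ with f₀ ∈ M_k(Γ,χ), f₁ ∈ M_{k-2}(Γ,χ), f₁ ≢ 0, and define W_f and Q_f as in the context. Then: (i) Q_f extends to a meromorphic function on ℍ all of whose poles have order at most 2, and Q_f((az+b)/(cz+d)) = (cz+d)⁴ Q_f(z) for all (a b; c d) ∈ Γ (so Q_f is a meromorphic modular form of weight 4 with trivial character on Γ); (ii) Q_f is holomorphic at ∞ (its q_N-expansion has no negative-power terms), and N² · lim_{Im z → ∞} Q_f(z) = κ∞², where κ∞ = ( v_∞(f) − min(v_∞(f), v_∞(f₁)) )/2; in particular 2κ∞ is a nonnegative integer. -/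

import Mathlib

noncomputable section

open Complex Matrix Filter Topology

abbrev SL2R := Matrix.SpecialLinearGroup (Fin 2) ℝ
abbrev SL2Z := Matrix.SpecialLinearGroup (Fin 2) ℤ

/-- The upper half-plane, as a subset of `ℂ`. -/
def UHP : Set ℂ := {z : ℂ | 0 < z.im}

/-- The embedding of `SL(2,ℤ)` into `SL(2,ℝ)`. -/
def toR : SL2Z →* SL2R := Matrix.SpecialLinearGroup.map (Int.castRingHom ℝ)

/-- `SL(2,ℤ)` as a subgroup of `SL(2,ℝ)`. -/
def SL2ZR : Subgroup SL2R := Subgroup.map toR ⊤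

/-- Möbius action of a real matrix on a complex number. -/
def moeb (γ : SL2R) (z : ℂ) : ℂ :=
  ((γ.1 0 0 : ℂ) * z + (γ.1 0 1 : ℂ)) / ((γ.1 1 0 : ℂ) * z + (γ.1 1 1 : ℂ))

/-- The automorphy factor `cz + d`. -/
def jfac (γ : SL2R) (z : ℂ) : ℂ := (γ.1 1 0 : ℂ) * z + (γ.1 1 1 : ℂ)

/-- A holomorphic modular form of weight `k` and character `χ` on `Γ ≤ SL(2,ℝ)`
(for `Γ` commensurable with `SL(2,ℤ)`): holomorphic on `ℍ`, satisfying the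
transformation law, and holomorphic (bounded) at every cusp. -/
structure IsModularForm (Γ : Subgroup SL2R) (χ : SL2R → ℂ) (k : ℤ) (f : ℂ → ℂ) : Prop where
  holo : DifferentiableOn ℂ f UHP
  transform : ∀ γ ∈ Γ, ∀ z ∈ UHP, f (moeb γ z) = χ γ * jfac γ z ^ k * f z
  bdd_at_cusps : ∀ σ : SL2Z, ∃ C : ℝ, ∀ z ∈ UHP, 1 ≤ z.im →
    ‖jfac (toR σ) z ^ (-k) * f (moeb (toR σ) z)‖ ≤ C

/-- A finite-order character of `Γ`. -/
def IsCharacter (Γ : Subgroup SL2R) (χ : SL2R → ℂ) : Prop :=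
  (∀ γ ∈ Γ, ∀ δ ∈ Γ, χ (γ * δ) = χ γ * χ δ) ∧
    ∃ n : ℕ, 0 < n ∧ ∀ γ ∈ Γ, χ γ ^ n = 1

/-- `φ` is quasimodular of weight 2 and depth 1 on `Γ`, with constant `α`:
`(cz+d)⁻² φ(γz) = φ(z) + α c/(cz+d)`. -/
def IsQuasiWt2 (Γ : Subgroup SL2R) (α : ℂ) (φ : ℂ → ℂ) : Prop :=
  ∀ γ ∈ Γ, ∀ z ∈ UHP,
    (jfac γ z)⁻¹ ^ 2 * φ (moeb γ z) = φ z + α * (γ.1 1 0 : ℂ) / jfac γ z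

/-- `f` has vanishing order `ν` at the cusp `∞`, with respect to `q_N = e^{2πiz/N}`:
`q_N^{-ν}·f(z)` tends to a nonzero constant as `Im z → ∞`. -/
def VOrder (N : ℝ) (f : ℂ → ℂ) (ν : ℝ) : Prop :=
  ∃ c : ℂ, c ≠ 0 ∧ ∀ ε : ℝ, 0 < ε → ∃ Y : ℝ, ∀ z : ℂ, Y ≤ z.im →
    ‖Complex.exp (-(2 * Real.pi * Complex.I * (ν : ℂ) * z / (N : ℂ))) * f z - c‖ < ε


/-- The translation matrix `(1 t; 0 1)` in `SL(2,ℝ)`. -/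
def upperTri (t : ℝ) : SL2R := ⟨!![1, t; 0, 1], by norm_num [Matrix.det_fin_two_of]⟩

/-- The cusp `∞` of `Γ` has width `N`. -/
def HasWidth (Γ : Subgroup SL2R) (N : ℝ) : Prop :=
  0 < N ∧ upperTri N ∈ Γ ∧
    ∀ γ ∈ Γ, γ.1 1 0 = 0 → ∃ m : ℤ, γ.1 0 1 = γ.1 0 0 * (m * N)

/-- The expression `Q_f = -(1/4π²)[f″/f - (f′/f)(W′/W) + (3/4)(W′/W)² - (1/2)(W″/W)]`,
i.e. formally `-(1/4π²)·g″/g` for `g = f/√W`. -/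
def Qformula (f W : ℂ → ℂ) (z : ℂ) : ℂ :=
  -(1 / (4 * (Real.pi : ℂ) ^ 2)) *
    (deriv (deriv f) z / f z - (deriv f z / f z) * (deriv W z / W z)
      + (3 / 4) * (deriv W z / W z) ^ 2 - (1 / 2) * (deriv (deriv W) z / W z))

/-!
Put `u = f` and `v = z f + α f₁`. The transformation laws of `f` and `f₁` say that `Γ` acts on the
pair `(u, v)` by matrices of determinant one, up to the factor `χ(γ) (cz + d) ^ (k - 1)`, and the
Wronskian `u′v - uv′` is `W_f`. Hence `4π² Q_f` is one half of the Schwarzian derivative of `v / u`.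
The latter does not change under a linear substitution of `(u, v)` or multiplication of both by a
common factor, and the Möbius map `γ` itself has zero Schwarzian, so composition with `γ` only
introduces the factor `γ′ ^ 2 = (cz + d) ^ (-4)`: this is modularity of weight four.

Logarithmic derivatives have at most simple poles, which bounds the poles of `Q_f`. At the cusp,
`f` and `f₁` are asymptotic to constants times exponentials, and by Cauchy's estimate these
asymptotics may be differentiated. This determines the leading term of `W_f` and the limit of `Q_f`.
Finally `f` and `f₁` are multiplied by the same constant under `z ↦ z + N`, so their orders differ
by an integer.
-/

section SecondOrderCalculus

variable {𝕜 : Type*} [NontriviallyNormedField 𝕜]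

/-- The Wronskian of two functions of one variable, with the sign convention `u′v - uv′`. -/
def wronskian (u v : 𝕜 → 𝕜) (z : 𝕜) : 𝕜 := deriv u z * v z - u z * deriv v z

/-- The potential `P` for which `u / √w` and `v / √w`, with `w` the Wronskian of `u` and `v`, solve
`y″ = P y`. It is minus one half of the Schwarzian derivative of `v / u`, written so that it makes
sense at the zeros of `u`; at the zeros of `w` its value is `0`. -/
def pairPotential (u v : 𝕜 → 𝕜) (z : 𝕜) : 𝕜 :=
  -(wronskian (deriv u) (deriv v) z / wronskian u v z)
    + 3 / 4 * (deriv (wronskian u v) z / wronskian u v z) ^ 2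
    - 1 / 2 * (deriv (deriv (wronskian u v)) z / wronskian u v z)

/-- The Schwarzian derivative. -/
def schwarzian (g : 𝕜 → 𝕜) (z : 𝕜) : 𝕜 :=
  deriv (deriv (deriv g)) z / deriv g z - 3 / 2 * (deriv (deriv g) z / deriv g z) ^ 2

variable {g s u u' v v' : 𝕜 → 𝕜} {z : 𝕜}

lemma wronskian_mul_left_right (hs : DifferentiableAt 𝕜 s z) (hu : DifferentiableAt 𝕜 u z)
    (hv : DifferentiableAt 𝕜 v z) :
    wronskian (s * u) (s * v) z = s z ^ 2 * wronskian u v z := by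
  simp only [wronskian, Pi.mul_apply, deriv_mul hs hu, deriv_mul hs hv]
  ring

lemma wronskian_comp (hg : DifferentiableAt 𝕜 g z) (hu : DifferentiableAt 𝕜 u (g z))
    (hv : DifferentiableAt 𝕜 v (g z)) :
    wronskian (u ∘ g) (v ∘ g) z = wronskian u v (g z) * deriv g z := by
  simp only [wronskian, Function.comp_apply, deriv_comp z hu hg, deriv_comp z hv hg]
  ring

lemma deriv_smul_add_smul (a b : 𝕜) (hu : DifferentiableAt 𝕜 u z) (hv : DifferentiableAt 𝕜 v z) :
    deriv (a • u + b • v) z = (a • deriv u + b • deriv v) z := by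
  simp [deriv_add (hu.const_smul a) (hv.const_smul b), deriv_const_smul_field]

lemma wronskian_smul_add_smul (a b c d : 𝕜) (hu : DifferentiableAt 𝕜 u z)
    (hv : DifferentiableAt 𝕜 v z) :
    wronskian (a • u + b • v) (c • u + d • v) z = (a * d - b * c) * wronskian u v z := by
  simp only [wronskian, deriv_smul_add_smul _ _ hu hv, Pi.add_apply, Pi.smul_apply, smul_eq_mul]
  ring

lemma wronskian_congr (hu : u =ᶠ[𝓝 z] u') (hv : v =ᶠ[𝓝 z] v') :
    wronskian u v =ᶠ[𝓝 z] wronskian u' v' := by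
  filter_upwards [hu, hv, hu.deriv, hv.deriv] with w h₁ h₂ h₃ h₄
  rw [wronskian, wronskian, h₁, h₂, h₃, h₄]

lemma pairPotential_congr (hu : u =ᶠ[𝓝 z] u') (hv : v =ᶠ[𝓝 z] v') :
    pairPotential u v z = pairPotential u' v' z := by
  have hw := wronskian_congr hu hv
  have hB := wronskian_congr hu.deriv hv.deriv
  rw [pairPotential, pairPotential, hB.eq_of_nhds, hw.eq_of_nhds, hw.deriv_eq, hw.deriv.deriv_eq]

lemma pairPotential_of_wronskian_eq_zero (h : wronskian u v z = 0) : pairPotential u v z = 0 := by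
  simp [pairPotential, h]

variable [CompleteSpace 𝕜]

lemma analyticAt_wronskian (hu : AnalyticAt 𝕜 u z) (hv : AnalyticAt 𝕜 v z) :
    AnalyticAt 𝕜 (wronskian u v) z :=
  (hu.deriv.mul hv).sub (hu.mul hv.deriv)

lemma deriv_mul_eventuallyEq (hu : AnalyticAt 𝕜 u z) (hv : AnalyticAt 𝕜 v z) :
    deriv (u * v) =ᶠ[𝓝 z] deriv u * v + u * deriv v := by
  filter_upwards [hu.eventually_analyticAt, hv.eventually_analyticAt] with w hu hv
  exact deriv_mul hu.differentiableAt hv.differentiableAt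

lemma deriv_comp_eventuallyEq (hu : AnalyticAt 𝕜 u (g z)) (hg : AnalyticAt 𝕜 g z) :
    deriv (u ∘ g) =ᶠ[𝓝 z] (deriv u ∘ g) * deriv g := by
  filter_upwards [hg.continuousAt.eventually hu.eventually_analyticAt, hg.eventually_analyticAt]
    with w hu hg
  exact deriv_comp w hu.differentiableAt hg.differentiableAt

lemma deriv_deriv_mul (hu : AnalyticAt 𝕜 u z) (hv : AnalyticAt 𝕜 v z) :
    deriv (deriv (u * v)) z =
      deriv (deriv u) z * v z + 2 * (deriv u z * deriv v z) + u z * deriv (deriv v) z := by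
  have hu' := hu.deriv.differentiableAt
  have hv' := hv.deriv.differentiableAt
  rw [(deriv_mul_eventuallyEq hu hv).deriv_eq, deriv_add (hu'.mul hv.differentiableAt)
    (hu.differentiableAt.mul hv'), deriv_mul hu' hv.differentiableAt,
    deriv_mul hu.differentiableAt hv']
  ring

lemma deriv_deriv_comp (hu : AnalyticAt 𝕜 u (g z)) (hg : AnalyticAt 𝕜 g z) :
    deriv (deriv (u ∘ g)) z =
      deriv (deriv u) (g z) * deriv g z ^ 2 + deriv u (g z) * deriv (deriv g) z := by
  have hu' := hu.deriv.differentiableAt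
  rw [(deriv_comp_eventuallyEq hu hg).deriv_eq,
    deriv_mul (hu'.comp z hg.differentiableAt) hg.deriv.differentiableAt,
    deriv_comp z hu' hg.differentiableAt, Function.comp_apply]
  ring

lemma deriv_wronskian (hu : AnalyticAt 𝕜 u z) (hv : AnalyticAt 𝕜 v z) :
    deriv (wronskian u v) z = deriv (deriv u) z * v z - u z * deriv (deriv v) z := by
  have hu' := hu.deriv.differentiableAt
  have hv' := hv.deriv.differentiableAt
  have hw : wronskian u v = deriv u * v - u * deriv v := rfl
  rw [hw, deriv_sub (hu'.mul hv.differentiableAt) (hu.differentiableAt.mul hv'),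
    deriv_mul hu' hv.differentiableAt, deriv_mul hu.differentiableAt hv']
  ring

lemma wronskian_deriv_mul (hs : AnalyticAt 𝕜 s z) (hu : AnalyticAt 𝕜 u z)
    (hv : AnalyticAt 𝕜 v z) :
    wronskian (deriv (s * u)) (deriv (s * v)) z =
      s z ^ 2 * wronskian (deriv u) (deriv v) z + s z * deriv s z * deriv (wronskian u v) z
        + (2 * deriv s z ^ 2 - s z * deriv (deriv s) z) * wronskian u v z := by
  rw [deriv_wronskian hu hv]
  simp only [wronskian, deriv_deriv_mul hs hu, deriv_deriv_mul hs hv,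
    deriv_mul hs.differentiableAt hu.differentiableAt,
    deriv_mul hs.differentiableAt hv.differentiableAt]
  ring

lemma wronskian_deriv_comp (hg : AnalyticAt 𝕜 g z) (hu : AnalyticAt 𝕜 u (g z))
    (hv : AnalyticAt 𝕜 v (g z)) :
    wronskian (deriv (u ∘ g)) (deriv (v ∘ g)) z =
      wronskian (deriv u) (deriv v) (g z) * deriv g z ^ 3 := by
  simp only [wronskian, deriv_deriv_comp hu hg, deriv_deriv_comp hv hg,
    deriv_comp z hu.differentiableAt hg.differentiableAt,
    deriv_comp z hv.differentiableAt hg.differentiableAt]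
  ring

lemma pairPotential_smul_add_smul {a b c d : 𝕜} (hdet : a * d - b * c ≠ 0)
    (hu : AnalyticAt 𝕜 u z) (hv : AnalyticAt 𝕜 v z) :
    pairPotential (a • u + b • v) (c • u + d • v) z = pairPotential u v z := by
  have hdiff : ∀ᶠ x in 𝓝 z, DifferentiableAt 𝕜 u x ∧ DifferentiableAt 𝕜 v x := by
    filter_upwards [hu.eventually_analyticAt, hv.eventually_analyticAt] with x hx hx'
    exact ⟨hx.differentiableAt, hx'.differentiableAt⟩
  have hcomb (p q : 𝕜) : deriv (p • u + q • v) =ᶠ[𝓝 z] p • deriv u + q • deriv v :=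
    hdiff.mono fun x hx ↦ deriv_smul_add_smul p q hx.1 hx.2
  have hw : wronskian (a • u + b • v) (c • u + d • v) =ᶠ[𝓝 z]
      (a * d - b * c) • wronskian u v :=
    hdiff.mono fun x hx ↦ wronskian_smul_add_smul a b c d hx.1 hx.2
  have hw' : deriv ((a * d - b * c) • wronskian u v) = (a * d - b * c) • deriv (wronskian u v) :=
    funext fun x ↦ deriv_const_smul_field _ _
  rw [pairPotential, (wronskian_congr (hcomb a b) (hcomb c d)).eq_of_nhds,
    wronskian_smul_add_smul a b c d hu.deriv.differentiableAt hv.deriv.differentiableAt,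
    hw.deriv.deriv_eq, hw.deriv_eq, hw.eq_of_nhds, hw', deriv_const_smul_field]
  simp only [Pi.smul_apply, smul_eq_mul, mul_div_mul_left _ _ hdet, pairPotential]

variable [CharZero 𝕜]

lemma pairPotential_mul_left_right (hs : AnalyticAt 𝕜 s z) (hs₀ : s z ≠ 0)
    (hu : AnalyticAt 𝕜 u z) (hv : AnalyticAt 𝕜 v z) :
    pairPotential (s * u) (s * v) z = pairPotential u v z := by
  have hw : wronskian (s * u) (s * v) =ᶠ[𝓝 z] (s * s) * wronskian u v := by
    filter_upwards [hs.eventually_analyticAt, hu.eventually_analyticAt,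
      hv.eventually_analyticAt] with x hs hu hv
    rw [wronskian_mul_left_right hs.differentiableAt hu.differentiableAt hv.differentiableAt,
      Pi.mul_apply, Pi.mul_apply, sq]
  have hw_an := analyticAt_wronskian hu hv
  rw [pairPotential, pairPotential, wronskian_deriv_mul hs hu hv, hw.deriv.deriv_eq, hw.deriv_eq,
    hw.eq_of_nhds, deriv_deriv_mul (hs.mul hs) hw_an, deriv_deriv_mul hs hs,
    deriv_mul (hs.mul hs).differentiableAt hw_an.differentiableAt,
    deriv_mul hs.differentiableAt hs.differentiableAt]
  simp only [Pi.mul_apply]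
  rcases eq_or_ne (wronskian u v z) 0 with h₀ | h₀
  · simp [h₀]
  · field_simp
    ring

lemma pairPotential_comp (hg : AnalyticAt 𝕜 g z) (hg₀ : deriv g z ≠ 0)
    (hu : AnalyticAt 𝕜 u (g z)) (hv : AnalyticAt 𝕜 v (g z)) (hw₀ : wronskian u v (g z) ≠ 0) :
    pairPotential (u ∘ g) (v ∘ g) z =
      deriv g z ^ 2 * pairPotential u v (g z) - 1 / 2 * schwarzian g z := by
  have hw : wronskian (u ∘ g) (v ∘ g) =ᶠ[𝓝 z] (wronskian u v ∘ g) * deriv g := by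
    filter_upwards [hg.eventually_analyticAt, hg.continuousAt.eventually hu.eventually_analyticAt,
      hg.continuousAt.eventually hv.eventually_analyticAt] with x hg hu hv
    exact wronskian_comp hg.differentiableAt hu.differentiableAt hv.differentiableAt
  have hw_an := analyticAt_wronskian hu hv
  have hw_comp : AnalyticAt 𝕜 (wronskian u v ∘ g) z := hw_an.comp hg
  rw [pairPotential, pairPotential, schwarzian, wronskian_deriv_comp hg hu hv, hw.deriv.deriv_eq,
    hw.deriv_eq, hw.eq_of_nhds, deriv_deriv_mul hw_comp hg.deriv, deriv_deriv_comp hw_an hg,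
    deriv_mul hw_comp.differentiableAt hg.deriv.differentiableAt,
    deriv_comp z hw_an.differentiableAt hg.differentiableAt]
  simp only [Pi.mul_apply, Function.comp_apply]
  field_simp
  ring

lemma deriv_sq_mul_pairPotential_of_projective {a b c d : 𝕜} (hdet : a * d - b * c ≠ 0)
    (hg : AnalyticAt 𝕜 g z) (hg₀ : deriv g z ≠ 0) (hschwarz : schwarzian g z = 0)
    (hs : AnalyticAt 𝕜 s z) (hs₀ : s z ≠ 0) (hu : AnalyticAt 𝕜 u z) (hv : AnalyticAt 𝕜 v z)
    (hug : AnalyticAt 𝕜 u (g z)) (hvg : AnalyticAt 𝕜 v (g z))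
    (hu_trans : u ∘ g =ᶠ[𝓝 z] s * (a • u + b • v)) (hv_trans : v ∘ g =ᶠ[𝓝 z] s * (c • u + d • v)) :
    deriv g z ^ 2 * pairPotential u v (g z) = pairPotential u v z := by
  have hcomb (p q : 𝕜) : AnalyticAt 𝕜 (p • u + q • v) z := hu.const_smul.add hv.const_smul
  have hinv : pairPotential (u ∘ g) (v ∘ g) z = pairPotential u v z := by
    rw [pairPotential_congr hu_trans hv_trans,
      pairPotential_mul_left_right hs hs₀ (hcomb a b) (hcomb c d),
      pairPotential_smul_add_smul hdet hu hv]
  rcases eq_or_ne (wronskian u v (g z)) 0 with hw | hw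
  · have hw' : wronskian (u ∘ g) (v ∘ g) z = 0 := by
      rw [wronskian_comp hg.differentiableAt hug.differentiableAt hvg.differentiableAt, hw,
        zero_mul]
    rw [← hinv, pairPotential_of_wronskian_eq_zero hw, pairPotential_of_wronskian_eq_zero hw',
      mul_zero]
  · rw [← hinv, pairPotential_comp hg hg₀ hug hvg hw, hschwarz, mul_zero, sub_zero]

end SecondOrderCalculus

section Poles

variable {𝕜 : Type*} [NontriviallyNormedField 𝕜] [CompleteSpace 𝕜] [CharZero 𝕜]
  {h : 𝕜 → 𝕜} {z₀ : 𝕜}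

lemma neg_one_le_meromorphicOrderAt_logDeriv (hh : MeromorphicAt h z₀) :
    -1 ≤ meromorphicOrderAt (logDeriv h) z₀ := by
  rcases eq_or_ne (meromorphicOrderAt h z₀) ⊤ with htop | htop
  · have hzero : h =ᶠ[𝓝[≠] z₀] 0 := meromorphicOrderAt_eq_top_iff.1 htop
    have hlog : logDeriv h =ᶠ[𝓝[≠] z₀] 0 := by
      filter_upwards [hzero] with z hz
      simp [logDeriv_apply, hz]
    exact (meromorphicOrderAt_eq_top_iff.2 hlog).symm ▸ le_top
  rcases eq_or_ne (meromorphicOrderAt h z₀) 0 with hord | hord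
  · exact le_trans (by decide) (meromorphicOrderAt_logDeriv_nonneg hh hord)
  · exact (meromorphicOrderAt_logDeriv_eq_neg_one hh hord htop).ge

lemma exists_analyticAt_deriv_div_eq (hh : MeromorphicAt h z₀) :
    ∃ a : 𝕜 → 𝕜, AnalyticAt 𝕜 a z₀ ∧ ∀ᶠ z in 𝓝[≠] z₀, deriv h z / h z = a z / (z - z₀) := by
  have hlog : MeromorphicAt (logDeriv h) z₀ := hh.deriv.div hh
  have hsub : MeromorphicAt (fun z ↦ z - z₀) z₀ := by fun_prop
  have hord : 0 ≤ meromorphicOrderAt ((fun z ↦ z - z₀) * logDeriv h) z₀ := by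
    rw [meromorphicOrderAt_mul hsub hlog]
    have := add_le_add_right (neg_one_le_meromorphicOrderAt_logDeriv hh) 1
    simpa using this
  obtain ⟨a, ha, hah⟩ := ((hsub.mul hlog).meromorphicOrderAt_nonneg_iff).1 hord
  refine ⟨a, ha, ?_⟩
  filter_upwards [hah, self_mem_nhdsWithin] with z hz hz₀
  rw [← hz, Pi.mul_apply, mul_div_cancel_left₀ _ (sub_ne_zero.2 hz₀), logDeriv_apply]

lemma exists_analyticAt_deriv_deriv_div_eq (hh : MeromorphicAt h z₀) :
    ∃ a : 𝕜 → 𝕜, AnalyticAt 𝕜 a z₀ ∧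
      ∀ᶠ z in 𝓝[≠] z₀, deriv (deriv h) z / h z = a z / (z - z₀) ^ 2 := by
  rcases hh.deriv.eventually_eq_zero_or_eventually_ne_zero with hzero | hne
  · have hzero' : deriv (deriv h) =ᶠ[𝓝[≠] z₀] deriv 0 := EventuallyEq.nhdsNE_deriv hzero
    refine ⟨0, analyticAt_const, ?_⟩
    filter_upwards [hzero'] with z hz
    simp [hz]
  · obtain ⟨a, ha, hah⟩ := exists_analyticAt_deriv_div_eq hh
    obtain ⟨b, hb, hbh⟩ := exists_analyticAt_deriv_div_eq hh.deriv
    refine ⟨b * a, hb.mul ha, ?_⟩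
    filter_upwards [hah, hbh, hne] with z hza hzb hz
    rw [← div_mul_div_cancel₀ hz, hza, hzb, div_mul_div_comm, sq, Pi.mul_apply]

end Poles

lemma exists_analyticAt_Qformula_eq {f W : ℂ → ℂ} {z₀ : ℂ} (hf : MeromorphicAt f z₀)
    (hW : MeromorphicAt W z₀) :
    ∃ g : ℂ → ℂ, AnalyticAt ℂ g z₀ ∧ ∀ᶠ z in 𝓝[≠] z₀, Qformula f W z = g z / (z - z₀) ^ 2 := by
  obtain ⟨a₁, ha₁, hfa₁⟩ := exists_analyticAt_deriv_div_eq hf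
  obtain ⟨a₂, ha₂, hfa₂⟩ := exists_analyticAt_deriv_deriv_div_eq hf
  obtain ⟨b₁, hb₁, hWb₁⟩ := exists_analyticAt_deriv_div_eq hW
  obtain ⟨b₂, hb₂, hWb₂⟩ := exists_analyticAt_deriv_deriv_div_eq hW
  refine ⟨fun z ↦ -(1 / (4 * (Real.pi : ℂ) ^ 2)) *
    (a₂ z - a₁ z * b₁ z + 3 / 4 * b₁ z ^ 2 - 1 / 2 * b₂ z), by fun_prop, ?_⟩
  filter_upwards [hfa₁, hfa₂, hWb₁, hWb₂, self_mem_nhdsWithin] with z e₁ e₂ e₃ e₄ hz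
  have hz' : z - z₀ ≠ 0 := sub_ne_zero.2 hz
  rw [Qformula, e₁, e₂, e₃, e₄]
  field_simp

section UpperHalfPlane

variable {h : ℂ → ℂ} {z z₀ w : ℂ}

lemma isOpen_UHP : IsOpen UHP := isOpen_lt continuous_const Complex.continuous_im

lemma isPreconnected_UHP : IsPreconnected UHP := (convex_halfSpace_im_gt 0).isPreconnected

lemma analyticAt_of_differentiableOn_UHP (hh : DifferentiableOn ℂ h UHP) (hz : z ∈ UHP) :
    AnalyticAt ℂ h z :=
  hh.analyticAt (isOpen_UHP.mem_nhds hz)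

lemma eventually_nhdsNE_ne_zero_of_differentiableOn_UHP (hh : DifferentiableOn ℂ h UHP)
    (hw : w ∈ UHP) (hhw : h w ≠ 0) (hz₀ : z₀ ∈ UHP) : ∀ᶠ z in 𝓝[≠] z₀, h z ≠ 0 := by
  refine (analyticAt_of_differentiableOn_UHP hh hz₀).eventually_eq_zero_or_eventually_ne_zero
    |>.resolve_left fun hzero ↦ hhw ?_
  exact (hh.analyticOnNhd isOpen_UHP).eqOn_zero_of_preconnected_of_eventuallyEq_zero
    isPreconnected_UHP hz₀ hzero hw

end UpperHalfPlane

section Moebius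

variable (γ : SL2R) {z : ℂ}

lemma det_SL2R_complex :
    (γ.1 0 0 : ℂ) * (γ.1 1 1 : ℂ) - (γ.1 0 1 : ℂ) * (γ.1 1 0 : ℂ) = 1 := by
  have hdet := γ.det_coe
  rw [Matrix.det_fin_two] at hdet
  exact_mod_cast hdet

lemma jfac_ne_zero (hz : z ∈ UHP) : jfac γ z ≠ 0 :=
  UpperHalfPlane.denom_ne_zero_of_im (γ : GL (Fin 2) ℝ) hz.ne'

lemma moeb_mem_UHP (hz : z ∈ UHP) : moeb γ z ∈ UHP := by
  have him : (moeb γ z).im = z.im / Complex.normSq (jfac γ z) := by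
    simpa using! UpperHalfPlane.moebius_im (γ : GL (Fin 2) ℝ) z
  rw [UHP, Set.mem_ofPred_eq, him]
  exact div_pos hz (Complex.normSq_pos.2 (jfac_ne_zero γ hz))

lemma hasDerivAt_jfac (z : ℂ) : HasDerivAt (jfac γ) (γ.1 1 0 : ℂ) z :=
  (((hasDerivAt_id z).const_mul _).add_const _).congr_deriv (mul_one _)

lemma hasDerivAt_jfac_zpow (m : ℤ) (hz : z ∈ UHP) :
    HasDerivAt (fun z ↦ jfac γ z ^ m) (m * jfac γ z ^ (m - 1) * (γ.1 1 0 : ℂ)) z :=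
  (hasDerivAt_zpow m _ (.inl (jfac_ne_zero γ hz))).comp z (hasDerivAt_jfac γ z)

lemma analyticAt_jfac_zpow (m : ℤ) (hz : z ∈ UHP) : AnalyticAt ℂ (fun z ↦ jfac γ z ^ m) z :=
  analyticAt_of_differentiableOn_UHP (fun _ hw ↦
    (hasDerivAt_jfac_zpow γ m hw).differentiableAt.differentiableWithinAt) hz

lemma hasDerivAt_moeb (hz : z ∈ UHP) : HasDerivAt (moeb γ) (jfac γ z ^ (-2 : ℤ)) z := by
  have hnum : HasDerivAt (fun z : ℂ ↦ (γ.1 0 0 : ℂ) * z + (γ.1 0 1 : ℂ)) (γ.1 0 0 : ℂ) z :=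
    (((hasDerivAt_id z).const_mul _).add_const _).congr_deriv (mul_one _)
  have hj := jfac_ne_zero γ hz
  refine (hnum.div (hasDerivAt_jfac γ z) hj).congr_deriv ?_
  rw [div_eq_iff (pow_ne_zero 2 hj), _root_.zpow_neg, zpow_ofNat,
    inv_mul_cancel₀ (pow_ne_zero 2 hj), jfac]
  linear_combination det_SL2R_complex γ

lemma analyticAt_moeb (hz : z ∈ UHP) : AnalyticAt ℂ (moeb γ) z :=
  analyticAt_of_differentiableOn_UHP (fun _ hw ↦
    (hasDerivAt_moeb γ hw).differentiableAt.differentiableWithinAt) hz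

lemma schwarzian_moeb (hz : z ∈ UHP) : schwarzian (moeb γ) z = 0 := by
  have hj := jfac_ne_zero γ hz
  have hderiv : Set.EqOn (deriv (moeb γ)) (fun z ↦ jfac γ z ^ (-2 : ℤ)) UHP :=
    fun w hw ↦ (hasDerivAt_moeb γ hw).deriv
  have hderiv₂ : Set.EqOn (deriv (deriv (moeb γ)))
      (fun z ↦ -2 * (γ.1 1 0 : ℂ) * jfac γ z ^ (-3 : ℤ)) UHP := fun w hw ↦ by
    rw [hderiv.deriv isOpen_UHP hw, (hasDerivAt_jfac_zpow γ (-2) hw).deriv]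
    norm_num
    ring
  have hderiv₃ : deriv (deriv (deriv (moeb γ))) z =
      6 * (γ.1 1 0 : ℂ) ^ 2 * jfac γ z ^ (-4 : ℤ) := by
    rw [hderiv₂.deriv isOpen_UHP hz, ((hasDerivAt_jfac_zpow γ (-3) hz).const_mul _).deriv]
    norm_num
    ring
  rw [schwarzian, hderiv₃, hderiv₂ hz, hderiv hz]
  simp only [_root_.zpow_neg, zpow_ofNat]
  field_simp
  ring

end Moebius

local notation "I∞" => comap Complex.im atTop

section ImInfty

lemma neBot_comap_im_atTop : (I∞).NeBot :=
  atTop_neBot.comap_of_surj Complex.im_surjective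

lemma tendsto_comap_im_atTop_iff {F : ℂ → ℂ} {c : ℂ} :
    Tendsto F I∞ (𝓝 c) ↔
      ∀ ε : ℝ, 0 < ε → ∃ Y : ℝ, ∀ z : ℂ, Y ≤ z.im → ‖F z - c‖ < ε := by
  rw [(atTop_basis.comap Complex.im).tendsto_iff Metric.nhds_basis_ball]
  simp [dist_eq_norm]

lemma eventually_comap_im_mem_UHP : ∀ᶠ z in I∞, z ∈ UHP :=
  tendsto_comap.eventually (eventually_gt_atTop (0 : ℝ))

lemma tendsto_add_ofReal_comap_im (N : ℝ) : Tendsto (fun z : ℂ ↦ z + N) I∞ I∞ :=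
  tendsto_comap_iff.2 (tendsto_comap.congr fun z ↦ by simp)

lemma eventually_comap_im_forall_closedBall {p : ℂ → Prop} (hp : ∀ᶠ z in I∞, p z) (r : ℝ) :
    ∀ᶠ z in I∞, ∀ w ∈ Metric.closedBall z r, p w := by
  obtain ⟨Y, hY⟩ := eventually_atTop.1 (eventually_comap.1 hp)
  filter_upwards [tendsto_comap.eventually (eventually_ge_atTop (Y + r))] with z hz w hw
  have him := (Complex.abs_im_le_norm (w - z)).trans (mem_closedBall_iff_norm.1 hw)
  rw [Complex.sub_im, abs_le] at him
  exact hY w.im (by linarith) w rfl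

lemma tendsto_deriv_zero_of_tendsto_comap_im {F : ℂ → ℂ} {c : ℂ}
    (hF : ∀ᶠ z in I∞, AnalyticAt ℂ F z) (hlim : Tendsto F I∞ (𝓝 c)) :
    Tendsto (deriv F) I∞ (𝓝 0) := by
  refine Metric.nhds_basis_closedBall.tendsto_right_iff.2 fun ε hε ↦ ?_
  have hclose := hlim.eventually (Metric.closedBall_mem_nhds c hε)
  filter_upwards [eventually_comap_im_forall_closedBall hF 1,
    eventually_comap_im_forall_closedBall hclose 1] with z han hbound
  have hdiff : DifferentiableOn ℂ (fun w ↦ F w - c) (Metric.closedBall z 1) := fun w hw ↦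
    ((han w hw).differentiableAt.sub_const c).differentiableWithinAt
  have hcauchy := Complex.norm_deriv_le_of_forall_mem_sphere_norm_le one_pos
    (hdiff.diffContOnCl_ball subset_rfl) fun w hw ↦
      mem_closedBall_iff_norm.1 (hbound w (Metric.sphere_subset_closedBall hw))
  simpa [deriv_sub_const] using hcauchy

lemma tendsto_exp_I_mul_comap_im {t : ℝ} (ht : 0 < t) :
    Tendsto (fun z : ℂ ↦ Complex.exp (I * t * z)) I∞ (𝓝 0) := by
  have hnorm (z : ℂ) : ‖Complex.exp (I * t * z)‖ = Real.exp (-(t * z.im)) := by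
    simp [Complex.norm_exp]
  rw [tendsto_zero_iff_norm_tendsto_zero]
  simp only [hnorm]
  exact Real.tendsto_exp_neg_atTop_nhds_zero.comp (tendsto_comap.const_mul_atTop ht)

/-- `F z` is asymptotic to `c * exp (i t z)` as `Im z → ∞`. The coefficient `c` may vanish, in which
case this says that `F z` is negligible compared with `exp (i t z)`. -/
def HasLeadingTerm (t : ℝ) (c : ℂ) (F : ℂ → ℂ) : Prop :=
  Tendsto (fun z ↦ Complex.exp (-(I * t * z)) * F z) I∞ (𝓝 c)

namespace HasLeadingTerm

variable {t s : ℝ} {c d : ℂ} {F G : ℂ → ℂ}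

protected lemma congr (hF : HasLeadingTerm t c F) (hFG : F =ᶠ[I∞] G) : HasLeadingTerm t c G :=
  Tendsto.congr' (hFG.mono fun z hz ↦ by rw [hz]) hF

protected lemma sub (hF : HasLeadingTerm t c F) (hG : HasLeadingTerm t d G) :
    HasLeadingTerm t (c - d) (F - G) :=
  (Tendsto.sub hF hG).congr fun _ ↦ (mul_sub _ _ _).symm

protected lemma const_smul (a : ℂ) (hF : HasLeadingTerm t c F) :
    HasLeadingTerm t (a * c) (a • F) :=
  (Tendsto.const_mul a hF).congr fun _ ↦ mul_left_comm _ _ _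

protected lemma mul (hF : HasLeadingTerm t c F) (hG : HasLeadingTerm s d G) :
    HasLeadingTerm (t + s) (c * d) (F * G) := by
  refine (Tendsto.mul hF hG).congr fun z ↦ ?_
  have hexp : Complex.exp (-(I * (t + s : ℝ) * z)) =
      Complex.exp (-(I * t * z)) * Complex.exp (-(I * s * z)) := by
    rw [← Complex.exp_add]
    push_cast
    ring_nf
  rw [hexp, Pi.mul_apply]
  ring

lemma zero_of_lt (hF : HasLeadingTerm s c F) (hts : t < s) : HasLeadingTerm t 0 F := by
  have hlim := (tendsto_exp_I_mul_comap_im (sub_pos.2 hts)).mul hF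
  rw [zero_mul] at hlim
  refine hlim.congr fun z ↦ ?_
  rw [← mul_assoc, ← Complex.exp_add]
  push_cast
  ring_nf

lemma eventually_ne_zero (hF : HasLeadingTerm t c F) (hc : c ≠ 0) : ∀ᶠ z in I∞, F z ≠ 0 :=
  (Tendsto.eventually_ne hF hc).mono fun _ hz ↦ right_ne_zero_of_mul hz

protected lemma deriv (hF : HasLeadingTerm t c F) (hF_an : ∀ᶠ z in I∞, AnalyticAt ℂ F z) :
    HasLeadingTerm t (I * t * c) (deriv F) := by
  have hexp (z : ℂ) : HasDerivAt (fun z ↦ Complex.exp (-(I * t * z)))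
      (Complex.exp (-(I * t * z)) * -(I * t)) z := by
    simpa using ((hasDerivAt_id z).const_mul (I * t)).neg.cexp
  have hprod_an : ∀ᶠ z in I∞, AnalyticAt ℂ (fun z ↦ Complex.exp (-(I * t * z)) * F z) z :=
    hF_an.mono fun z hz ↦ by fun_prop
  have hlim := (tendsto_deriv_zero_of_tendsto_comap_im hprod_an hF).add
    (Tendsto.const_mul (I * t) hF)
  rw [zero_add] at hlim
  refine hlim.congr' ?_
  filter_upwards [hF_an] with z hz
  rw [((hexp z).fun_mul hz.differentiableAt.hasDerivAt).deriv]
  ring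

lemma tendsto_div (hF : HasLeadingTerm t c F) (hG : HasLeadingTerm t d G) (hd : d ≠ 0) :
    Tendsto (fun z ↦ F z / G z) I∞ (𝓝 (c / d)) :=
  (Tendsto.div hF hG hd).congr fun _ ↦ mul_div_mul_left _ _ (Complex.exp_ne_zero _)

lemma tendsto_deriv_div (hF : HasLeadingTerm t c F) (hc : c ≠ 0)
    (hF_an : ∀ᶠ z in I∞, AnalyticAt ℂ F z) :
    Tendsto (fun z ↦ deriv F z / F z) I∞ (𝓝 (I * t)) := by
  simpa [hc] using (hF.deriv hF_an).tendsto_div hF hc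

lemma tendsto_deriv_deriv_div (hF : HasLeadingTerm t c F) (hc : c ≠ 0)
    (hF_an : ∀ᶠ z in I∞, AnalyticAt ℂ F z) :
    Tendsto (fun z ↦ deriv (deriv F) z / F z) I∞ (𝓝 ((I * t) ^ 2)) := by
  have hlim := ((hF.deriv hF_an).deriv (hF_an.mono fun _ ↦ AnalyticAt.deriv)).tendsto_div hF hc
  rwa [← mul_assoc, mul_div_cancel_right₀ _ hc, ← sq] at hlim

protected lemma wronskian (hF : HasLeadingTerm t c F) (hG : HasLeadingTerm s d G)
    (hF_an : ∀ᶠ z in I∞, AnalyticAt ℂ F z) (hG_an : ∀ᶠ z in I∞, AnalyticAt ℂ G z) :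
    HasLeadingTerm (t + s) (I * (t - s) * (c * d)) (wronskian F G) := by
  have hlead := ((hF.deriv hF_an).mul hG).sub (hF.mul (hG.deriv hG_an))
  rwa [show I * t * c * d - c * (I * s * d) = I * (t - s) * (c * d) by ring] at hlead

/-- When `s < t` the Wronskian dominates `F ^ 2`; otherwise `F ^ 2` dominates, the leading terms in
the Wronskian cancelling if `s = t`. -/
lemma exists_smul_wronskian_sub_mul_self (hF : HasLeadingTerm t c F) (hc : c ≠ 0)
    (hG : HasLeadingTerm s d G) (hd : d ≠ 0) (hF_an : ∀ᶠ z in I∞, AnalyticAt ℂ F z)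
    (hG_an : ∀ᶠ z in I∞, AnalyticAt ℂ G z) {α : ℂ} (hα : α ≠ 0) :
    ∃ e : ℂ, e ≠ 0 ∧ HasLeadingTerm (t + min t s) e (α • wronskian F G - F * F) := by
  have hwronskian := (hF.wronskian hG hF_an hG_an).const_smul α
  have hsq := hF.mul hF
  rcases lt_trichotomy t s with hts | rfl | hst
  · rw [min_eq_left hts.le]
    exact ⟨0 - c * c, by simpa, (hwronskian.zero_of_lt (by linarith)).sub hsq⟩
  · rw [min_self]
    exact ⟨_, by simpa, hwronskian.sub hsq⟩
  · rw [min_eq_right hst.le]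
    refine ⟨_, ?_, hwronskian.sub (hsq.zero_of_lt (by linarith))⟩
    have hsub : (t : ℂ) - s ≠ 0 := by exact_mod_cast (sub_pos.2 hst).ne'
    simp [hα, hc, hd, hsub]

lemma tendsto_Qformula (hF : HasLeadingTerm t c F) (hc : c ≠ 0) (hG : HasLeadingTerm s d G)
    (hd : d ≠ 0) (hF_an : ∀ᶠ z in I∞, AnalyticAt ℂ F z) (hG_an : ∀ᶠ z in I∞, AnalyticAt ℂ G z) :
    Tendsto (Qformula F G) I∞ (𝓝 (((t - s / 2) / (2 * Real.pi)) ^ 2 : ℝ)) := by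
  have hlogF := hF.tendsto_deriv_div hc hF_an
  have hlogG := hG.tendsto_deriv_div hd hG_an
  have hlim := ((((hF.tendsto_deriv_deriv_div hc hF_an).sub (hlogF.mul hlogG)).add
    ((hlogG.pow 2).const_mul (3 / 4))).sub
      ((hG.tendsto_deriv_deriv_div hd hG_an).const_mul (1 / 2))).const_mul
        (-(1 / (4 * (Real.pi : ℂ) ^ 2)))
  have hvalue : ((((t - s / 2) / (2 * Real.pi)) ^ 2 : ℝ) : ℂ) = -(1 / (4 * (Real.pi : ℂ) ^ 2)) *
      ((I * t) ^ 2 - I * t * (I * s) + 3 / 4 * (I * s) ^ 2 - 1 / 2 * (I * s) ^ 2) := by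
    push_cast
    linear_combination ((t - s / 2) ^ 2 / (4 * (Real.pi : ℂ) ^ 2)) * Complex.I_sq
  rwa [hvalue]

lemma exp_eq_of_map_add {N : ℝ} {x : ℂ} (hF : HasLeadingTerm t c F) (hc : c ≠ 0)
    (hmult : ∀ᶠ z in I∞, F (z + N) = x * F z) : Complex.exp (I * t * N) = x := by
  have := neBot_comap_im_atTop
  have hshift := Tendsto.comp hF (tendsto_add_ofReal_comap_im N)
  have hscaled : Tendsto ((fun z ↦ Complex.exp (-(I * t * z)) * F z) ∘ fun z ↦ z + N) I∞
      (𝓝 (Complex.exp (-(I * t * N)) * x * c)) := by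
    refine (Tendsto.const_mul (Complex.exp (-(I * t * N)) * x) hF).congr' ?_
    filter_upwards [hmult] with z hz
    rw [Function.comp_apply, hz, mul_add, neg_add, Complex.exp_add]
    ring
  have hone : Complex.exp (-(I * t * N)) * x = 1 :=
    mul_right_cancel₀ hc ((tendsto_nhds_unique hscaled hshift).trans (one_mul c).symm)
  rwa [Complex.exp_neg, inv_mul_eq_one₀ (Complex.exp_ne_zero _)] at hone

lemma exists_int_of_map_add {N : ℝ} {x : ℂ} (hF : HasLeadingTerm t c F) (hc : c ≠ 0)
    (hG : HasLeadingTerm s d G) (hd : d ≠ 0) (hF_mult : ∀ᶠ z in I∞, F (z + N) = x * F z)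
    (hG_mult : ∀ᶠ z in I∞, G (z + N) = x * G z) : ∃ m : ℤ, (t - s) * N = 2 * Real.pi * m := by
  obtain ⟨m, hm⟩ := Complex.exp_eq_exp_iff_exists_int.1 <|
    (hF.exp_eq_of_map_add hc hF_mult).trans (hG.exp_eq_of_map_add hd hG_mult).symm
  refine ⟨m, ?_⟩
  have hm' : ((t - s) * N : ℂ) = 2 * Real.pi * m :=
    mul_left_cancel₀ Complex.I_ne_zero (by linear_combination hm)
  exact_mod_cast hm'

lemma exists_mem_UHP_ne_zero (hF : HasLeadingTerm t c F) (hc : c ≠ 0) : ∃ w ∈ UHP, F w ≠ 0 :=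
  have := neBot_comap_im_atTop
  (eventually_comap_im_mem_UHP.and (hF.eventually_ne_zero hc)).exists

end HasLeadingTerm

lemma exists_hasLeadingTerm_of_VOrder {N ν : ℝ} {F : ℂ → ℂ} (hF : VOrder N F ν) :
    ∃ c : ℂ, c ≠ 0 ∧ HasLeadingTerm (2 * Real.pi / N * ν) c F := by
  obtain ⟨c, hc, hlim⟩ := hF
  refine ⟨c, hc, (tendsto_comap_im_atTop_iff.2 hlim).congr fun z ↦ ?_⟩
  push_cast
  ring_nf

lemma exists_int_eq_sub_of_VOrder {N ν ν₁ : ℝ} {F G : ℂ → ℂ} {x : ℂ} (hN : N ≠ 0)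
    (hF : VOrder N F ν) (hG : VOrder N G ν₁) (hF_mult : ∀ z ∈ UHP, F (z + N) = x * F z)
    (hG_mult : ∀ z ∈ UHP, G (z + N) = x * G z) : ∃ m : ℤ, (m : ℝ) = ν - ν₁ := by
  obtain ⟨c, hc, hF_lead⟩ := exists_hasLeadingTerm_of_VOrder hF
  obtain ⟨d, hd, hG_lead⟩ := exists_hasLeadingTerm_of_VOrder hG
  obtain ⟨m, hm⟩ := hF_lead.exists_int_of_map_add hc hG_lead hd
    (eventually_comap_im_mem_UHP.mono hF_mult) (eventually_comap_im_mem_UHP.mono hG_mult)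
  refine ⟨m, mul_left_cancel₀ Real.two_pi_pos.ne' (hm.symm.trans ?_)⟩
  field_simp

end ImInfty

section DepthOne

/-- `f` is a holomorphic quasimodular form of weight `k` and depth at most one on `Γ` with
multiplier `χ`, and `α * f₁` is the coefficient of `c / (cz + d)` in its transformation law. No
growth condition at the cusps is imposed. -/
structure IsDepthOneQuasimodular (Γ : Subgroup SL2R) (χ : SL2R → ℂ) (k : ℤ) (α : ℂ)
    (f f₁ : ℂ → ℂ) : Prop where
  holo : DifferentiableOn ℂ f UHP
  holo₁ : DifferentiableOn ℂ f₁ UHP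
  transform : ∀ γ ∈ Γ, ∀ z ∈ UHP,
    f (moeb γ z) = χ γ * jfac γ z ^ k * (f z + α * (γ.1 1 0 : ℂ) / jfac γ z * f₁ z)
  transform₁ : ∀ γ ∈ Γ, ∀ z ∈ UHP, f₁ (moeb γ z) = χ γ * jfac γ z ^ (k - 2) * f₁ z

/-- The function `z f + α f₁`, which together with `f` spans a two-dimensional space stable under
the slash action of weight `k - 1`. -/
def companion (α : ℂ) (f f₁ : ℂ → ℂ) (z : ℂ) : ℂ := z * f z + α * f₁ z

variable {Γ : Subgroup SL2R} {χ : SL2R → ℂ} {k : ℤ} {α : ℂ} {f f₀ f₁ φ : ℂ → ℂ} {z : ℂ}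
  {γ : SL2R}

lemma isDepthOneQuasimodular_of_eq_add_mul (hf₀ : IsModularForm Γ χ k f₀)
    (hf₁ : IsModularForm Γ χ (k - 2) f₁) (hφ_holo : DifferentiableOn ℂ φ UHP)
    (hφ : IsQuasiWt2 Γ α φ) (hf : ∀ z ∈ UHP, f z = f₀ z + φ z * f₁ z) :
    IsDepthOneQuasimodular Γ χ k α f f₁ where
  holo := (hf₀.holo.add (hφ_holo.mul hf₁.holo)).congr hf
  holo₁ := hf₁.holo
  transform γ hγ z hz := by
    have hj := jfac_ne_zero γ hz
    have hφγ : φ (moeb γ z) = jfac γ z ^ 2 * (φ z + α * (γ.1 1 0 : ℂ) / jfac γ z) := by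
      rw [← hφ γ hγ z hz, inv_pow, mul_inv_cancel_left₀ (pow_ne_zero 2 hj)]
    rw [hf _ (moeb_mem_UHP γ hz), hf z hz, hφγ, hf₀.transform γ hγ z hz, hf₁.transform γ hγ z hz,
      zpow_sub₀ hj, zpow_ofNat]
    field_simp
    ring
  transform₁ := hf₁.transform

lemma hasDerivAt_companion (hf : DifferentiableAt ℂ f z) (hf₁ : DifferentiableAt ℂ f₁ z) :
    HasDerivAt (companion α f f₁) (f z + z * deriv f z + α * deriv f₁ z) z :=
  (((hasDerivAt_id z).mul hf.hasDerivAt).add (hf₁.hasDerivAt.const_mul α)).congr_deriv (by simp)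

lemma wronskian_companion (hf : DifferentiableAt ℂ f z) (hf₁ : DifferentiableAt ℂ f₁ z) :
    wronskian f (companion α f f₁) z =
      -(f z) ^ 2 + α * (f₁ z * deriv f z - deriv f₁ z * f z) := by
  rw [wronskian, (hasDerivAt_companion hf hf₁).deriv, companion]
  ring

lemma Qformula_eq_pairPotential {u v W : ℂ → ℂ} (hu : AnalyticAt ℂ u z) (hv : AnalyticAt ℂ v z)
    (hW : W =ᶠ[𝓝 z] wronskian u v) (hu₀ : u z ≠ 0) (hW₀ : W z ≠ 0) :
    Qformula u W z = -(1 / (4 * (Real.pi : ℂ) ^ 2)) * pairPotential u v z := by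
  rw [hW.eq_of_nhds] at hW₀
  rw [Qformula, pairPotential, hW.eq_of_nhds, hW.deriv_eq, hW.deriv.deriv_eq]
  congr 3
  rw [deriv_wronskian hu hv]
  field_simp
  simp only [wronskian]
  ring

namespace IsDepthOneQuasimodular

lemma analyticAt (hf : IsDepthOneQuasimodular Γ χ k α f f₁) (hz : z ∈ UHP) :
    AnalyticAt ℂ f z :=
  analyticAt_of_differentiableOn_UHP hf.holo hz

lemma analyticAt_companion (hf : IsDepthOneQuasimodular Γ χ k α f f₁) (hz : z ∈ UHP) :
    AnalyticAt ℂ (companion α f f₁) z :=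
  analyticAt_of_differentiableOn_UHP
    ((differentiableOn_id.mul hf.holo).add (hf.holo₁.const_mul α)) hz

lemma map_moeb (hf : IsDepthOneQuasimodular Γ χ k α f f₁) (hγ : γ ∈ Γ) (hz : z ∈ UHP) :
    f (moeb γ z) = χ γ * jfac γ z ^ (k - 1) *
      ((γ.1 1 1 : ℂ) * f z + (γ.1 1 0 : ℂ) * companion α f f₁ z) := by
  have hj := jfac_ne_zero γ hz
  have hjf : (γ.1 1 1 : ℂ) * f z + (γ.1 1 0 : ℂ) * companion α f f₁ z =
      jfac γ z * (f z + α * (γ.1 1 0 : ℂ) / jfac γ z * f₁ z) := by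
    field_simp
    rw [companion, jfac]
    ring
  rw [hf.transform γ hγ z hz, hjf, zpow_sub_one₀ hj]
  field_simp

lemma companion_map_moeb (hf : IsDepthOneQuasimodular Γ χ k α f f₁) (hγ : γ ∈ Γ)
    (hz : z ∈ UHP) :
    companion α f f₁ (moeb γ z) = χ γ * jfac γ z ^ (k - 1) *
      ((γ.1 0 1 : ℂ) * f z + (γ.1 0 0 : ℂ) * companion α f f₁ z) := by
  have hj := jfac_ne_zero γ hz
  have hmoeb : moeb γ z = ((γ.1 0 0 : ℂ) * z + (γ.1 0 1 : ℂ)) / jfac γ z := rfl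
  rw [companion, hf.map_moeb hγ hz, hf.transform₁ γ hγ z hz, hmoeb,
    show k - 1 = k - 2 + 1 by ring, zpow_add_one₀ hj, companion]
  field_simp
  rw [jfac]
  linear_combination (-χ γ * α * f₁ z) * det_SL2R_complex γ

lemma pairPotential_companion_moeb (hf : IsDepthOneQuasimodular Γ χ k α f f₁) (hγ : γ ∈ Γ)
    (hχ : χ γ ≠ 0) (hz : z ∈ UHP) :
    pairPotential f (companion α f f₁) (moeb γ z) =
      jfac γ z ^ 4 * pairPotential f (companion α f f₁) z := by
  have hj := jfac_ne_zero γ hz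
  have hmem := isOpen_UHP.mem_nhds hz
  have hdet : (γ.1 1 1 : ℂ) * (γ.1 0 0 : ℂ) - (γ.1 1 0 : ℂ) * (γ.1 0 1 : ℂ) ≠ 0 := by
    rw [mul_comm (γ.1 1 1 : ℂ), mul_comm (γ.1 1 0 : ℂ), det_SL2R_complex γ]
    exact one_ne_zero
  have hderiv := (hasDerivAt_moeb γ hz).deriv
  have hproj := deriv_sq_mul_pairPotential_of_projective (s := fun z ↦ χ γ * jfac γ z ^ (k - 1))
    hdet (analyticAt_moeb γ hz) (hderiv ▸ zpow_ne_zero _ hj) (schwarzian_moeb γ hz)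
    (analyticAt_const.mul (analyticAt_jfac_zpow γ (k - 1) hz))
    (mul_ne_zero hχ (zpow_ne_zero _ hj)) (hf.analyticAt hz) (hf.analyticAt_companion hz)
    (hf.analyticAt (moeb_mem_UHP γ hz)) (hf.analyticAt_companion (moeb_mem_UHP γ hz))
    (mem_of_superset hmem fun w hw ↦ hf.map_moeb hγ hw)
    (mem_of_superset hmem fun w hw ↦ hf.companion_map_moeb hγ hw)
  rw [← hproj, hderiv, _root_.zpow_neg, zpow_ofNat]
  field_simp

lemma map_add_of_upperTri_mem {N : ℝ} (hf : IsDepthOneQuasimodular Γ χ k α f f₁)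
    (hN : upperTri N ∈ Γ) (hz : z ∈ UHP) :
    f (z + N) = χ (upperTri N) * f z := by
  simpa [moeb, jfac, upperTri] using hf.transform _ hN z hz

lemma map_add_of_upperTri_mem₁ {N : ℝ} (hf : IsDepthOneQuasimodular Γ χ k α f f₁)
    (hN : upperTri N ∈ Γ) (hz : z ∈ UHP) :
    f₁ (z + N) = χ (upperTri N) * f₁ z := by
  simpa [moeb, jfac, upperTri] using hf.transform₁ _ hN z hz

end IsDepthOneQuasimodular

end DepthOne

section PotentialOfQuasimodular

variable {f W Q : ℂ → ℂ} {z₀ : ℂ}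

lemma exists_analyticAt_eq_div_sq_of_eq_Qformula (hf : DifferentiableOn ℂ f UHP)
    (hW : DifferentiableOn ℂ W UHP) (hf_ne : ∃ w ∈ UHP, f w ≠ 0) (hW_ne : ∃ w ∈ UHP, W w ≠ 0)
    (hQ : ∀ z ∈ UHP, f z ≠ 0 → W z ≠ 0 → Q z = Qformula f W z) (hz₀ : z₀ ∈ UHP) :
    ∃ g : ℂ → ℂ, AnalyticAt ℂ g z₀ ∧ ∀ᶠ z in 𝓝[≠] z₀, Q z = g z / (z - z₀) ^ 2 := by
  obtain ⟨w, hw, hfw⟩ := hf_ne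
  obtain ⟨w', hw', hWw'⟩ := hW_ne
  obtain ⟨g, hg, hgQ⟩ := exists_analyticAt_Qformula_eq
    (analyticAt_of_differentiableOn_UHP hf hz₀).meromorphicAt
    (analyticAt_of_differentiableOn_UHP hW hz₀).meromorphicAt
  refine ⟨g, hg, ?_⟩
  filter_upwards [hgQ, mem_nhdsWithin_of_mem_nhds (isOpen_UHP.mem_nhds hz₀),
    eventually_nhdsNE_ne_zero_of_differentiableOn_UHP hf hw hfw hz₀,
    eventually_nhdsNE_ne_zero_of_differentiableOn_UHP hW hw' hWw' hz₀] with z hzg hz hfz hWz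
  rw [hQ z hz hfz hWz, hzg]

lemma tendsto_of_eq_Qformula {t s : ℝ} {c d : ℂ} (hf : DifferentiableOn ℂ f UHP)
    (hW : DifferentiableOn ℂ W UHP) (hf_lead : HasLeadingTerm t c f) (hc : c ≠ 0)
    (hW_lead : HasLeadingTerm s d W) (hd : d ≠ 0)
    (hQ : ∀ z ∈ UHP, f z ≠ 0 → W z ≠ 0 → Q z = Qformula f W z) :
    Tendsto Q I∞ (𝓝 (((t - s / 2) / (2 * Real.pi)) ^ 2 : ℝ)) := by
  refine (hf_lead.tendsto_Qformula hc hW_lead hd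
    (eventually_comap_im_mem_UHP.mono fun _ ↦ analyticAt_of_differentiableOn_UHP hf)
    (eventually_comap_im_mem_UHP.mono fun _ ↦ analyticAt_of_differentiableOn_UHP hW)).congr' ?_
  filter_upwards [eventually_comap_im_mem_UHP, hf_lead.eventually_ne_zero hc,
    hW_lead.eventually_ne_zero hd] with z hz hfz hWz
  exact (hQ z hz hfz hWz).symm

lemma exists_int_eq_sub_min {ν ν₁ : ℝ} (h : ∃ m : ℤ, (m : ℝ) = ν - ν₁) :
    ∃ m : ℤ, (m : ℝ) = ν - min ν ν₁ := by
  rcases le_total ν ν₁ with hle | hle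
  · exact ⟨0, by simp [hle]⟩
  · rwa [min_eq_right hle]

lemma ne_zero_of_isCharacter {Γ : Subgroup SL2R} {χ : SL2R → ℂ} {γ : SL2R}
    (hχ : IsCharacter Γ χ) (hγ : γ ∈ Γ) : χ γ ≠ 0 := by
  obtain ⟨-, n, hn, hpow⟩ := hχ
  intro hzero
  simpa [hzero, hn.ne'] using hpow γ hγ

/-- The extension of `Q_f` across the zeros of `f`: the potential of the pair formed by `f` and its
companion, scaled by `-1 / (4 π ^ 2)`. At the zeros of `W_f` its value is `0`. -/
def companionPotential (α : ℂ) (f f₁ : ℂ → ℂ) (z : ℂ) : ℂ :=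
  -(1 / (4 * (Real.pi : ℂ) ^ 2)) * pairPotential f (companion α f f₁) z

namespace IsDepthOneQuasimodular

variable {Γ : Subgroup SL2R} {χ : SL2R → ℂ} {k : ℤ} {α : ℂ} {f₁ : ℂ → ℂ} {z : ℂ} {γ : SL2R}
  {N ν ν₁ : ℝ}

lemma differentiableOn_wronskian_companion (hf : IsDepthOneQuasimodular Γ χ k α f f₁) :
    DifferentiableOn ℂ (wronskian f (companion α f f₁)) UHP := fun _ hz ↦
  (analyticAt_wronskian (hf.analyticAt hz)
    (hf.analyticAt_companion hz)).differentiableAt.differentiableWithinAt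

lemma eqOn_wronskian_companion (hf : IsDepthOneQuasimodular Γ χ k α f f₁) :
    Set.EqOn (wronskian f (companion α f f₁))
      (fun z ↦ -(f z) ^ 2 + α * (f₁ z * deriv f z - deriv f₁ z * f z)) UHP := fun _ hz ↦
  wronskian_companion (hf.analyticAt hz).differentiableAt
    (analyticAt_of_differentiableOn_UHP hf.holo₁ hz).differentiableAt

lemma exists_hasLeadingTerm_wronskian_companion (hf : IsDepthOneQuasimodular Γ χ k α f f₁)
    (hα : α ≠ 0) (hN : 0 < N) (hν : VOrder N f ν) (hν₁ : VOrder N f₁ ν₁) :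
    ∃ e : ℂ, e ≠ 0 ∧
      HasLeadingTerm (2 * Real.pi / N * (ν + min ν ν₁)) e (wronskian f (companion α f f₁)) := by
  obtain ⟨c, hc, hf_lead⟩ := exists_hasLeadingTerm_of_VOrder hν
  obtain ⟨d, hd, hf₁_lead⟩ := exists_hasLeadingTerm_of_VOrder hν₁
  obtain ⟨e, he, hlead⟩ := hf_lead.exists_smul_wronskian_sub_mul_self hc hf₁_lead hd
    (eventually_comap_im_mem_UHP.mono fun _ ↦ hf.analyticAt)
    (eventually_comap_im_mem_UHP.mono fun _ ↦ analyticAt_of_differentiableOn_UHP hf.holo₁) hα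
  rw [← mul_min_of_nonneg _ _ (by positivity), ← mul_add] at hlead
  refine ⟨e, he, hlead.congr ?_⟩
  filter_upwards [eventually_comap_im_mem_UHP] with z hz
  rw [hf.eqOn_wronskian_companion hz]
  simp only [Pi.sub_apply, Pi.smul_apply, Pi.mul_apply, smul_eq_mul, wronskian]
  ring

lemma companionPotential_eq_Qformula (hf : IsDepthOneQuasimodular Γ χ k α f f₁)
    (hW : Set.EqOn W (wronskian f (companion α f f₁)) UHP) (hz : z ∈ UHP) (hfz : f z ≠ 0)
    (hWz : W z ≠ 0) : companionPotential α f f₁ z = Qformula f W z :=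
  (Qformula_eq_pairPotential (hf.analyticAt hz) (hf.analyticAt_companion hz)
    (hW.eventuallyEq_of_mem (isOpen_UHP.mem_nhds hz)) hfz hWz).symm

lemma companionPotential_moeb (hf : IsDepthOneQuasimodular Γ χ k α f f₁) (hγ : γ ∈ Γ)
    (hχ : χ γ ≠ 0) (hz : z ∈ UHP) :
    companionPotential α f f₁ (moeb γ z) = jfac γ z ^ 4 * companionPotential α f f₁ z := by
  rw [companionPotential, hf.pairPotential_companion_moeb hγ hχ hz, mul_left_comm,
    companionPotential]

lemma exists_analyticAt_companionPotential_eq (hf : IsDepthOneQuasimodular Γ χ k α f f₁)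
    (hα : α ≠ 0) (hN : 0 < N) (hν : VOrder N f ν) (hν₁ : VOrder N f₁ ν₁) (hz₀ : z₀ ∈ UHP) :
    ∃ g : ℂ → ℂ, AnalyticAt ℂ g z₀ ∧
      ∀ᶠ z in 𝓝[≠] z₀, companionPotential α f f₁ z = g z / (z - z₀) ^ 2 := by
  obtain ⟨c, hc, hf_lead⟩ := exists_hasLeadingTerm_of_VOrder hν
  obtain ⟨e, he, hw_lead⟩ := hf.exists_hasLeadingTerm_wronskian_companion hα hN hν hν₁
  exact exists_analyticAt_eq_div_sq_of_eq_Qformula hf.holo hf.differentiableOn_wronskian_companion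
    (hf_lead.exists_mem_UHP_ne_zero hc) (hw_lead.exists_mem_UHP_ne_zero he)
    (fun _ ↦ hf.companionPotential_eq_Qformula fun _ _ ↦ rfl) hz₀

lemma tendsto_companionPotential (hf : IsDepthOneQuasimodular Γ χ k α f f₁)
    (hα : α ≠ 0) (hN : 0 < N) (hν : VOrder N f ν) (hν₁ : VOrder N f₁ ν₁) :
    Tendsto (companionPotential α f f₁) I∞ (𝓝 (((ν - min ν ν₁) / 2) ^ 2 / N ^ 2 : ℝ)) := by
  obtain ⟨c, hc, hf_lead⟩ := exists_hasLeadingTerm_of_VOrder hν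
  obtain ⟨e, he, hw_lead⟩ := hf.exists_hasLeadingTerm_wronskian_companion hα hN hν hν₁
  have hvalue : ((ν - min ν ν₁) / 2) ^ 2 / N ^ 2 =
      ((2 * Real.pi / N * ν - 2 * Real.pi / N * (ν + min ν ν₁) / 2) / (2 * Real.pi)) ^ 2 := by
    field_simp
    ring
  rw [hvalue]
  exact tendsto_of_eq_Qformula hf.holo hf.differentiableOn_wronskian_companion hf_lead hc hw_lead
    he fun _ ↦ hf.companionPotential_eq_Qformula fun _ _ ↦ rfl

lemma exists_int_eq_sub_vOrder (hf : IsDepthOneQuasimodular Γ χ k α f f₁) (hN : 0 < N)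
    (hNΓ : upperTri N ∈ Γ) (hν : VOrder N f ν) (hν₁ : VOrder N f₁ ν₁) :
    ∃ m : ℤ, (m : ℝ) = ν - ν₁ :=
  exists_int_eq_sub_of_VOrder hN.ne' hν hν₁ (fun _ ↦ hf.map_add_of_upperTri_mem hNΓ)
    (fun _ ↦ hf.map_add_of_upperTri_mem₁ hNΓ)

end IsDepthOneQuasimodular

end PotentialOfQuasimodular

theorem Qf_meromorphic_modular_weight_four_general
    {Γ : Subgroup SL2R} {N : ℝ} (hN : 0 < N) (hNΓ : upperTri N ∈ Γ)
    {χ : SL2R → ℂ} (hχ : ∀ γ ∈ Γ, χ γ ≠ 0) {α : ℂ} (hα : α ≠ 0) {k : ℤ} {f f₁ W : ℂ → ℂ}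
    (hf : IsDepthOneQuasimodular Γ χ k α f f₁)
    (hW : ∀ z ∈ UHP, W z = -(f z) ^ 2 + α * (f₁ z * deriv f z - deriv f₁ z * f z))
    {νf νf₁ : ℝ} (hνf : VOrder N f νf) (hνf₁ : VOrder N f₁ νf₁)
    {κ : ℝ} (hκ : κ = (νf - min νf νf₁) / 2) :
    ∃ Q : ℂ → ℂ,
      (∀ z ∈ UHP, f z ≠ 0 → W z ≠ 0 → Q z = Qformula f W z) ∧
      (∀ z₀ ∈ UHP, ∃ g : ℂ → ℂ, AnalyticAt ℂ g z₀ ∧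
        ∀ᶠ z in 𝓝[≠] z₀, Q z = g z / (z - z₀) ^ 2) ∧
      (∀ γ ∈ Γ, ∀ z ∈ UHP, Q (moeb γ z) = jfac γ z ^ 4 * Q z) ∧
      (∀ ε : ℝ, 0 < ε → ∃ Y : ℝ, ∀ z ∈ UHP, Y ≤ z.im →
        ‖Q z - ((κ ^ 2 / N ^ 2 : ℝ) : ℂ)‖ < ε) ∧
      (0 ≤ κ ∧ ∃ m : ℤ, (m : ℝ) = 2 * κ) := by
  have hW_eq : Set.EqOn W (wronskian f (companion α f f₁)) UHP := fun z hz ↦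
    (hW z hz).trans (hf.eqOn_wronskian_companion hz).symm
  have hνf_ge : min νf νf₁ ≤ νf := min_le_left _ _
  obtain ⟨m, hm⟩ := exists_int_eq_sub_min (hf.exists_int_eq_sub_vOrder hN hNΓ hνf hνf₁)
  refine ⟨companionPotential α f f₁, fun _ ↦ hf.companionPotential_eq_Qformula hW_eq,
    fun _ ↦ hf.exists_analyticAt_companionPotential_eq hα hN hνf hνf₁,
    fun γ hγ _ ↦ hf.companionPotential_moeb hγ (hχ γ hγ), fun ε hε ↦ ?_, by linarith,
    m, by linarith⟩
  obtain ⟨Y, hY⟩ := tendsto_comap_im_atTop_iff.1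
    (hf.tendsto_companionPotential hα hN hνf hνf₁) ε hε
  rw [hκ]
  exact ⟨Y, fun z _ ↦ hY z⟩

/-- Theorem: `Q_f` is a meromorphic modular form of weight 4, with
poles of order ≤ 2, holomorphic at `∞` with value `κ∞²/N²`. -/
theorem Qf_meromorphic_modular_weight_four
    (Γ : Subgroup SL2R) (hcomm : Subgroup.Commensurable SL2ZR Γ)
    (N : ℝ) (hwidth : HasWidth Γ N)
    (χ : SL2R → ℂ) (hχ : IsCharacter Γ χ)
    (φ : ℂ → ℂ) (hφholo : DifferentiableOn ℂ φ UHP)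
    (hφper : ∀ z ∈ UHP, φ (z + N) = φ z)
    (hφbdd : ∃ C : ℝ, ∀ z ∈ UHP, 1 ≤ z.im → ‖φ z‖ ≤ C)
    (α : ℂ) (hα : α ≠ 0) (hφqm : IsQuasiWt2 Γ α φ)
    (k : ℤ)
    (f₀ f₁ : ℂ → ℂ)
    (hf₀ : IsModularForm Γ χ k f₀)
    (hf₁ : IsModularForm Γ χ (k - 2) f₁)
    (hf₁ne : ∃ z ∈ UHP, f₁ z ≠ 0)
    (f W : ℂ → ℂ)
    (hf : ∀ z, f z = f₀ z + φ z * f₁ z)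
    (hW : ∀ z, W z = -(f z) ^ 2 + α * (f₁ z * deriv f z - deriv f₁ z * f z))
    (νf νf₁ : ℝ) (hνf : VOrder N f νf) (hνf₁ : VOrder N f₁ νf₁)
    (κ : ℝ) (hκ : κ = (νf - min νf νf₁) / 2) :
    ∃ Q : ℂ → ℂ,
      -- `Q` agrees with `Q_f` away from the zeros of `f·W_f`
      (∀ z ∈ UHP, f z ≠ 0 → W z ≠ 0 → Q z = Qformula f W z) ∧
      -- (i) `Q` is meromorphic on `ℍ` with all poles of order at most 2 ...
      (∀ z₀ ∈ UHP, ∃ g : ℂ → ℂ, AnalyticAt ℂ g z₀ ∧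
        ∀ᶠ z in 𝓝[≠] z₀, Q z = g z / (z - z₀) ^ 2) ∧
      -- ... and is a meromorphic modular form of weight 4 with trivial character on `Γ`
      (∀ γ ∈ Γ, ∀ z ∈ UHP, Q (moeb γ z) = jfac γ z ^ 4 * Q z) ∧
      -- (ii) `Q` is holomorphic at `∞` and `N²·lim_{Im z → ∞} Q(z) = κ∞²`
      (∀ ε : ℝ, 0 < ε → ∃ Y : ℝ, ∀ z ∈ UHP, Y ≤ z.im →
        ‖Q z - ((κ ^ 2 / N ^ 2 : ℝ) : ℂ)‖ < ε) ∧
      -- in particular `2κ∞` is a nonnegative integer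
      (0 ≤ κ ∧ ∃ m : ℤ, (m : ℝ) = 2 * κ) :=
  Qf_meromorphic_modular_weight_four_general hwidth.1 hwidth.2.1
    (fun _ ↦ ne_zero_of_isCharacter hχ) hα
    (isDepthOneQuasimodular_of_eq_add_mul hf₀ hf₁ hφholo hφqm fun z _ ↦ hf z) (fun z _ ↦ hW z)
    hνf hνf₁ hκ
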